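/- Let H : M → ℝ be a smooth compactly supported function on a compact-free setting as above and let c₊(H) = sup_{L∈𝓛} min_L H for a family 𝓛 invariant under isotopies. Assume the property: for any interval [E₁, E₂] of regular values, {H ≥ E₁} ⊇ some L ∈ 𝓛 implies {H ≥ E₂} ⊇ some L' ∈ 𝓛. Then c₊(H) is a critical value of H, i.e., there exists x with H(x) = c₊(H) and dH(x) = 0 (assuming the set of critical values of a compactly supported smooth function is closed). -/

import Mathlib

open scoped Manifold

theorem cplus_is_critical_value
    {E : Type*} [NormedAddCommGroup E] [NormedSpace ℝ E] [FiniteDimensional ℝ E]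
    {M : Type*} [TopologicalSpace M] [ChartedSpace E M] [T2Space M]
    (H : M → ℝ) (hH : ContMDiff (𝓘(ℝ, E)) (𝓘(ℝ, ℝ)) (⊤ : ℕ∞) H)
    (hHsupp : HasCompactSupport H)
    (𝓛 : Set (Set M)) (h𝓛ne : 𝓛.Nonempty)
    (hcompact : ∀ L ∈ 𝓛, IsCompact L) (hne : ∀ L ∈ 𝓛, L.Nonempty)
    (hpush : ∀ E₁ E₂ : ℝ, E₁ < E₂ →
      (∀ x, H x ∈ Set.Icc E₁ E₂ → mfderiv (𝓘(ℝ, E)) (𝓘(ℝ, ℝ)) H x ≠ 0) →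
      (∃ L ∈ 𝓛, L ⊆ {x | E₁ ≤ H x}) → ∃ L' ∈ 𝓛, L' ⊆ {x | E₂ ≤ H x})
    (hclosed : IsClosed {v : ℝ | ∃ x, H x = v ∧ mfderiv (𝓘(ℝ, E)) (𝓘(ℝ, ℝ)) H x = 0}) :
    ∃ x, H x = (⨆ L : 𝓛, sInf (H '' (L : Set M))) ∧
      mfderiv (𝓘(ℝ, E)) (𝓘(ℝ, ℝ)) H x = 0 := by
  have hc : Continuous H := hH.continuous
  have hr : IsCompact (Set.range H) := hHsupp.isCompact_range hc
  obtain ⟨B, hB⟩ := hr.bddAbove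
  have hbb : ∀ S : Set M, BddBelow (H '' S) := fun S =>
    hr.bddBelow.mono (Set.image_subset_range H S)
  have hbdd : BddAbove (Set.range fun L : 𝓛 => sInf (H '' (L : Set M))) := by
    refine ⟨B, ?_⟩
    rintro _ ⟨L, rfl⟩
    obtain ⟨x, hx⟩ := hne L L.2
    exact (csInf_le (hbb _) ⟨x, hx, rfl⟩).trans (hB ⟨x, rfl⟩)
  have : Nonempty 𝓛 := h𝓛ne.to_subtype
  set c : ℝ := ⨆ L : 𝓛, sInf (H '' (L : Set M)) with hcdef
  by_contra hcon
  obtain ⟨ε, hε, hball⟩ := Metric.isOpen_iff.1 hclosed.isOpen_compl c hcon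
  obtain ⟨L, hL⟩ := exists_lt_of_lt_ciSup (show c - ε / 2 < _ by rw [← hcdef]; linarith)
  obtain ⟨L', hL', hsub⟩ := hpush (c - ε / 2) (c + ε / 2) (by linarith)
    (by
      intro x hx h0
      refine hball (a := H x) ?_ ⟨x, rfl, h0⟩
      rw [Metric.mem_ball, Real.dist_eq, abs_lt]
      constructor <;> linarith [hx.1, hx.2])
    ⟨L, L.2, fun x hx => hL.le.trans (csInf_le (hbb _) ⟨x, hx, rfl⟩)⟩
  have h1 : c + ε / 2 ≤ sInf (H '' L') := by
    refine le_csInf ((hne L' hL').image H) ?_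
    rintro _ ⟨x, hx, rfl⟩
    exact hsub hx
  have h2 : sInf (H '' L') ≤ c := le_ciSup hbdd ⟨L', hL'⟩
  linarith
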